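/- Let n ≥ 2 and let c : Fin n → Fin n → ℤ. For each j ∈ Fin n set φ_j = ∏_{i ≠ j} α_{i,j}^{c(i,j)} (the factors pairwise commute). Then the product ∏_{j} φ_j, taken over j ∈ Fin n in increasing order, is an inner automorphism of F_n if and only if each φ_j is an inner automorphism of F_n, i.e., if and only if for every j the integers c(i,j) for i ≠ j are all equal to each other. -/

import Mathlib

/-- The Whitehead generator `α_{I,j} ∈ Aut(F_n)`: the automorphism of the free group
`FreeGroup (Fin n)` determined on the basis by `x i ↦ x j⁻¹ * x i * x j` for `i ∈ I`
and `x i ↦ x i` for `i ∉ I`. -/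
def whitehead (n : ℕ) (I : Finset (Fin n)) (j : Fin n) : MulAut (FreeGroup (Fin n)) :=
  MonoidHom.toMulEquiv
    (FreeGroup.lift (fun i : Fin n =>
      if i ∈ I then (FreeGroup.of j)⁻¹ * FreeGroup.of i * FreeGroup.of j
      else FreeGroup.of i))
    (FreeGroup.lift (fun i : Fin n =>
      if i ∈ I then FreeGroup.of j * FreeGroup.of i * (FreeGroup.of j)⁻¹
      else FreeGroup.of i))
    (by
      apply FreeGroup.ext_hom
      intro i
      by_cases hi : i ∈ I <;> by_cases hj : j ∈ I <;>
        simp [hi, hj, FreeGroup.lift_apply_of] <;> group)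
    (by
      apply FreeGroup.ext_hom
      intro i
      by_cases hi : i ∈ I <;> by_cases hj : j ∈ I <;>
        simp [hi, hj, FreeGroup.lift_apply_of] <;> group)

/-!
If an automorphism `f` of a free group sends each basis element `x i` to `(w i)⁻¹ * x i * w i`,
then the exponent sum of `x j` in `w i` depends only on `f` when `i ≠ j`: two choices of `w i`
differ by an element commuting with `x i`, whose exponent sum in `x j` is zero. On such
automorphisms these exponent sums are additive under composition, so `∏ j, φ j` has exponent sums
`c i j`, whereas conjugation by `g` has exponent sums that do not depend on `i`.
-/

open FreeGroup (of lift ext_hom)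

theorem zpow_apply_of_apply_eq_conj {G : Type*} [Group G] {f : MulAut G} {t x : G}
    (ht : f t = t) (hx : f x = t⁻¹ * x * t) (z : ℤ) :
    (f ^ z) x = (t ^ z)⁻¹ * x * t ^ z := by
  have hcomm : Commute (MulAut.conj t) f := by
    ext y
    simp only [MulAut.mul_apply, MulAut.conj_apply, map_mul, map_inv, ht]
  have hfix : MulAut.conj t * f ∈ MulAction.stabilizer (MulAut G) x := by
    simp [MulAction.mem_stabilizer_iff, hx, mul_assoc]
  have hfix_zpow : t ^ z * (f ^ z) x * (t ^ z)⁻¹ = x := by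
    simpa [hcomm.mul_zpow, MulAction.mem_stabilizer_iff, ← map_zpow] using zpow_mem hfix z
  calc (f ^ z) x = (t ^ z)⁻¹ * (t ^ z * (f ^ z) x * (t ^ z)⁻¹) * t ^ z := by group
    _ = (t ^ z)⁻¹ * x * t ^ z := by rw [hfix_zpow]

section Centralizer

variable {α G : Type*} [Group G] (f : FreeGroup α →* G) {i : α}

theorem map_eq_one_of_commute_of (hi : f (of i) = 1) {w : FreeGroup α} (hw : Commute w (of i)) :
    f w = 1 := by
  classical
  -- `of i` maps to a function supported at `1`, and `w` translates its support by `f w`.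
  let δ : G → Multiplicative ℤ := Pi.mulSingle 1 (Multiplicative.ofAdd 1)
  let ρ : FreeGroup α →* Multiplicative ℤ ≀ᵣ G := lift fun k => ⟨δ, f (of k)⟩
  have hright (u : FreeGroup α) : (ρ u).right = f u := by
    have : RegularWreathProduct.rightHom.comp ρ = f := ext_hom _ _ fun k => by simp [ρ]
    exact DFunLike.congr_fun this u
  have hρ : ρ w * ρ (of i) = ρ (of i) * ρ w := (hw.map ρ).eq
  have hδ : δ (f w)⁻¹ = δ 1 := by
    have := congrFun (congrArg RegularWreathProduct.left hρ) 1
    simpa [ρ, hright, hi, mul_comm] using this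
  by_contra hne
  have hδ_inv : δ (f w)⁻¹ = 1 := Pi.mulSingle_eq_of_ne (inv_ne_one.mpr hne) _
  have hδ_one : δ 1 = Multiplicative.ofAdd 1 := Pi.mulSingle_eq_same _ _
  exact one_ne_zero (ofAdd_eq_one.mp (hδ_one.symm.trans (hδ.symm.trans hδ_inv)))

theorem map_eq_map_of_conj_of_eq (hi : f (of i) = 1) {u v : FreeGroup α}
    (h : u⁻¹ * of i * u = v⁻¹ * of i * v) : f u = f v := by
  have hcomm : Commute (u * v⁻¹) (of i) :=
    calc u * v⁻¹ * of i = u * (v⁻¹ * of i * v) * v⁻¹ := by group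
      _ = of i * (u * v⁻¹) := by rw [← h]; group
  rw [← mul_inv_eq_one, ← map_inv, ← map_mul]
  exact map_eq_one_of_commute_of f hi hcomm

end Centralizer

/-- The automorphism `f` is basis-conjugating, the basis element `i` being conjugated by `w i`,
on the same side as in `whitehead`. The family `w` is not determined by `f`, so it is kept as an
argument. -/
def HasConjugators {α : Type*} (f : MulAut (FreeGroup α)) (w : α → FreeGroup α) : Prop :=
  ∀ i, f (of i) = (w i)⁻¹ * of i * w i

namespace HasConjugators

variable {α : Type*} {f g : MulAut (FreeGroup α)} {u v : α → FreeGroup α}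

theorem one : HasConjugators (1 : MulAut (FreeGroup α)) 1 := fun i => by simp

theorem mul (hf : HasConjugators f u) (hg : HasConjugators g v) :
    HasConjugators (f * g) fun i => u i * f (v i) := fun i => by
  simp [hf i, hg i, mul_assoc]

theorem conj (a : FreeGroup α) : HasConjugators (MulAut.conj a) fun _ => a⁻¹ := fun i => by simp

theorem map_apply {G : Type*} [CommGroup G] (χ : FreeGroup α →* G) (hf : HasConjugators f u)
    (w : FreeGroup α) : χ (f w) = χ w := by
  have : χ.comp f.toMonoidHom = χ := ext_hom _ _ fun i => by simp [hf i, mul_comm]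
  exact DFunLike.congr_fun this w

theorem map_eq {G : Type*} [Group G] (χ : FreeGroup α →* G) {i : α} (hi : χ (of i) = 1)
    (hu : HasConjugators f u) (hv : HasConjugators f v) : χ (u i) = χ (v i) :=
  map_eq_map_of_conj_of_eq χ hi ((hu i).symm.trans (hv i))

theorem exists_list_prod {G ι : Type*} [CommGroup G] (χ : FreeGroup α →* G)
    {φ : ι → MulAut (FreeGroup α)} {v : ι → α → FreeGroup α}
    (hφ : ∀ k, HasConjugators (φ k) (v k)) (L : List ι) :
    ∃ w, HasConjugators (L.map φ).prod w ∧ ∀ i, χ (w i) = (L.map fun k => χ (v k i)).prod := by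
  induction L with
  | nil => exact ⟨1, one, by simp⟩
  | cons k L ih =>
    obtain ⟨w, hw, hχ⟩ := ih
    refine ⟨_, (hφ k).mul hw, fun i => ?_⟩
    simp only [map_mul, (hφ k).map_apply, hχ, List.map_cons, List.prod_cons]

end HasConjugators

/-- The exponent sum of the basis element `j` in a word, written multiplicatively. -/
def exponentSum {α : Type*} [DecidableEq α] (j : α) : FreeGroup α →* Multiplicative ℤ :=
  lift (Pi.mulSingle j (Multiplicative.ofAdd 1))

theorem exponentSum_of_self {α : Type*} [DecidableEq α] (j : α) :
    exponentSum j (of j) = Multiplicative.ofAdd 1 := by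
  simp [exponentSum]

theorem exponentSum_of_ne {α : Type*} [DecidableEq α] {j k : α} (h : k ≠ j) :
    exponentSum j (of k) = 1 := by
  simp [exponentSum, h]

section Whitehead

variable {n : ℕ} {j : Fin n}

theorem whitehead_apply_of (I : Finset (Fin n)) (j k : Fin n) :
    whitehead n I j (of k) = if k ∈ I then (of j)⁻¹ * of k * of j else of k := by
  simp [whitehead]

theorem whitehead_zpow_apply_of {I : Finset (Fin n)} (hj : j ∉ I) (z : ℤ) (k : Fin n) :
    (whitehead n I j ^ z) (of k) =
      if k ∈ I then (of j ^ z)⁻¹ * of k * of j ^ z else of k := by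
  split_ifs with hk
  · exact zpow_apply_of_apply_eq_conj (by simp [whitehead_apply_of, hj])
      (by simp [whitehead_apply_of, hk]) z
  · simpa using zpow_apply_of_apply_eq_conj (map_one (whitehead n I j))
      (by simp [whitehead_apply_of, hk]) z

theorem list_prod_whitehead_zpow_apply_of (c : Fin n → ℤ) {L : List (Fin n)} (hj : j ∉ L)
    (hL : L.Nodup) (k : Fin n) :
    (L.map fun i => whitehead n {i} j ^ c i).prod (of k) =
      if k ∈ L then (of j ^ c k)⁻¹ * of k * of j ^ c k else of k := by
  induction L with
  | nil => simp
  | cons a L ih =>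
    obtain ⟨hja, hjL⟩ := List.ne_and_not_mem_of_not_mem_cons hj
    obtain ⟨haL, hL⟩ := List.nodup_cons.mp hL
    have hfix {m : Fin n} (hm : m ≠ a) : (whitehead n {a} j ^ c a) (of m) = of m := by
      simp [whitehead_zpow_apply_of, hja, hm]
    rw [List.map_cons, List.prod_cons, MulAut.mul_apply, ih hjL hL]
    rcases eq_or_ne k a with rfl | hka
    · simp [haL, whitehead_zpow_apply_of, hja]
    · by_cases hk : k ∈ L <;> simp [hk, hka, hfix hka, hfix hja]

/-- The automorphism `φ j = ∏_{i ≠ j} α_{i,j} ^ c i`; the value `c j` does not matter. -/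
def whiteheadProd (n : ℕ) (j : Fin n) (c : Fin n → ℤ) : MulAut (FreeGroup (Fin n)) :=
  (((List.finRange n).filter (fun i => i ≠ j)).map (fun i => whitehead n {i} j ^ c i)).prod

theorem hasConjugators_whiteheadProd (j : Fin n) (c : Fin n → ℤ) :
    HasConjugators (whiteheadProd n j c) fun i => of j ^ c i := fun i => by
  rw [whiteheadProd, list_prod_whitehead_zpow_apply_of c (by simp)
    ((List.nodup_finRange n).filter _)]
  rcases eq_or_ne i j with rfl | hij
  · simp only [List.mem_filter, List.mem_finRange, ne_eq, not_true_eq_false, decide_false,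
      Bool.false_eq_true, and_false, if_false]
    group
  · simp [hij]

theorem whiteheadProd_eq_conj {c : Fin n → ℤ} {d : ℤ} (hc : ∀ i, i ≠ j → c i = d) :
    whiteheadProd n j c = MulAut.conj (of j ^ d)⁻¹ := by
  refine MulEquiv.toMonoidHom_injective (ext_hom _ _ fun i => ?_)
  calc whiteheadProd n j c (of i)
      = (of j ^ c i)⁻¹ * of i * of j ^ c i := hasConjugators_whiteheadProd j c i
    _ = (of j ^ d)⁻¹ * of i * of j ^ d := by
      rcases eq_or_ne i j with rfl | hij
      · group
      · rw [hc i hij]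
    _ = MulAut.conj (of j ^ d)⁻¹ (of i) := by rw [MulAut.conj_apply, inv_inv]

theorem ofAdd_eq_exponentSum_of_prod_whiteheadProd_eq_conj {c : Fin n → Fin n → ℤ}
    {g : FreeGroup (Fin n)}
    (hg : ((List.finRange n).map fun k => whiteheadProd n k (c · k)).prod = MulAut.conj g)
    {i : Fin n} (hij : i ≠ j) : Multiplicative.ofAdd (c i j) = exponentSum j g⁻¹ := by
  obtain ⟨w, hw, hχ⟩ := HasConjugators.exists_list_prod (exponentSum j)
    (fun k => hasConjugators_whiteheadProd k (c · k)) (List.finRange n)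
  calc Multiplicative.ofAdd (c i j)
      = ∏ k, exponentSum j (of k ^ c i k) := by
        rw [Fintype.prod_eq_single j fun k hk => by simp [exponentSum_of_ne hk]]
        simp [exponentSum_of_self, ← ofAdd_zsmul]
    _ = exponentSum j (w i) := by rw [hχ, Fin.prod_univ_def]
    _ = exponentSum j g⁻¹ := HasConjugators.map_eq _ (exponentSum_of_ne hij) (hg ▸ hw) (.conj g)

end Whitehead

/-- For `n ≥ 2` and `c : Fin n → Fin n → ℤ`, set
`φ j = ∏_{i ≠ j} α_{i,j} ^ (c i j)` (the factors pairwise commute). The product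
`∏ j φ j`, over `j ∈ Fin n` in increasing order, is inner if and only if every
`φ j` is inner, if and only if for each `j` the integers `c i j` for `i ≠ j`
are all equal to each other. -/
theorem prod_prod_whitehead_inner_iff (n : ℕ) (hn : 2 ≤ n) (c : Fin n → Fin n → ℤ) :
    let φ : Fin n → MulAut (FreeGroup (Fin n)) := fun j =>
      ((((List.finRange n).filter (fun i => i ≠ j)).map
        (fun i => whitehead n {i} j ^ c i j)).prod)
    ((((List.finRange n).map φ).prod
        ∈ Set.range (MulAut.conj : FreeGroup (Fin n) →* MulAut (FreeGroup (Fin n))))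
      ↔ ∀ j : Fin n,
          φ j ∈ Set.range (MulAut.conj : FreeGroup (Fin n) →* MulAut (FreeGroup (Fin n))))
    ∧ ((((List.finRange n).map φ).prod
        ∈ Set.range (MulAut.conj : FreeGroup (Fin n) →* MulAut (FreeGroup (Fin n))))
      ↔ ∀ j : Fin n, ∀ i i' : Fin n, i ≠ j → i' ≠ j → c i j = c i' j) := by
  intro φ
  have equal_of_inner (h : ((List.finRange n).map φ).prod ∈ Set.range MulAut.conj) (j i i' : Fin n)
      (hi : i ≠ j) (hi' : i' ≠ j) : c i j = c i' j := by
    obtain ⟨g, hg⟩ := h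
    exact Multiplicative.ofAdd.injective <|
      (ofAdd_eq_exponentSum_of_prod_whiteheadProd_eq_conj hg.symm hi).trans
        (ofAdd_eq_exponentSum_of_prod_whiteheadProd_eq_conj hg.symm hi').symm
  have factors_inner (h : ∀ j i i' : Fin n, i ≠ j → i' ≠ j → c i j = c i' j) (j : Fin n) :
      φ j ∈ Set.range MulAut.conj := by
    have : Nontrivial (Fin n) := Fin.nontrivial_iff_two_le.mpr hn
    obtain ⟨i', hi'⟩ := exists_ne j
    exact ⟨_, (whiteheadProd_eq_conj fun i hi => h j i i' hi hi').symm⟩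
  have prod_inner (h : ∀ j, φ j ∈ Set.range MulAut.conj) :
      ((List.finRange n).map φ).prod ∈ Set.range MulAut.conj :=
    (MulAut.conj : FreeGroup (Fin n) →* _).range.list_prod_mem
      (List.forall_mem_map.mpr fun j _ => h j)
  exact ⟨⟨fun h => factors_inner (equal_of_inner h), prod_inner⟩,
    ⟨equal_of_inner, fun h => prod_inner (factors_inner h)⟩⟩
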